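/- Assume the bounded-variance condition, the concave-penalty condition, and the sparse-eigenvalue condition with constants c > 0 and κ. Let β₀ ∈ B_{τ,κ} with s = ‖β₀‖₀, let β̂ be a global minimizer of Q_n over B_{τ,κ}, and assume ‖n⁻¹Xᵀε‖_∞ ≤ λ/2. Set C₀ = (1 + 2c₃)/(c·c₂) and ρ = C₀²λ²/τ², and assume ρ < 1. Then for every q ∈ [1,2] the estimation error satisfies ‖β̂ − β₀‖_q ≤ C₀·λ·s^{1/q}·(1 − ρ)^{−1/q}, where ‖v‖_q = (Σ_j |v_j|^q)^{1/q}, and moreover ‖β̂ − β₀‖_∞ ≤ C₀·λ·s^{1/2}·(1 − ρ)^{−1/2}. -/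

import Mathlib

open scoped BigOperators Classical

/-- The number of nonzero coordinates of a vector (the `L₀` "norm"). -/
noncomputable def l0 {p : ℕ} (v : Fin p → ℝ) : ℕ :=
  (Finset.univ.filter fun j => v j ≠ 0).card

/-- The thresholded parameter space `B_{τ,κ}`: vectors with fewer than `κ/2` nonzero
coordinates, each nonzero coordinate having magnitude at least `τ`. -/
def Bset {p : ℕ} (τ : ℝ) (κ : ℕ) : Set (Fin p → ℝ) :=
  {β | 2 * l0 β < κ ∧ ∀ j, β j = 0 ∨ τ ≤ |β j|}

/-- The penalized negative log-likelihood
`Q_n(β) = −n⁻¹(yᵀXβ − Σᵢ b((Xβ)ᵢ)) + Σⱼ p_λ(|β_j|)`. -/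
noncomputable def Qn {n p : ℕ} (X : Matrix (Fin n) (Fin p) ℝ) (y : Fin n → ℝ)
    (b : ℝ → ℝ) (pen : ℝ → ℝ) (β : Fin p → ℝ) : ℝ :=
  -(1 / (n : ℝ)) * (∑ i, y i * X.mulVec β i - ∑ i, b (X.mulVec β i)) + ∑ j, pen |β j|

lemma aux_pen (pen : ℝ → ℝ) (L : ℝ) (hL : 0 ≤ L)
    (hmono : MonotoneOn pen (Set.Ici 0))
    (hconc : ConcaveOn ℝ (Set.Ici 0) pen)
    (hd : HasDerivWithinAt pen L (Set.Ici 0) 0) (a d : ℝ) (ha : 0 ≤ a) (hd0 : 0 ≤ d) :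
    pen a - pen d ≤ L * |a - d| := by
  have key : ∀ x, 0 < x → pen x - pen 0 ≤ L * x := by
    intro x hx
    have h := hconc.slope_le_of_hasDerivWithinAt (x := 0) (y := x) (by simp) (by simpa using hx.le) hx hd
    rw [slope_def_field, div_le_iff₀ (by linarith)] at h
    simpa using h
  rcases le_or_gt a d with h | h
  · have := hmono (Set.mem_Ici.2 ha) (Set.mem_Ici.2 hd0) h
    have : 0 ≤ L * |a - d| := by positivity
    linarith
  · rw [abs_of_pos (by linarith)]
    rcases hd0.eq_or_lt with h0 | h0
    · subst h0
      simpa using key a h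
    · have h1 := hconc.slope_anti_adjacent (x := 0) (y := d) (z := a) (by simp) (by simpa using ha) h0 h
      have h2 : (pen d - pen 0) / (d - 0) ≤ L := by
        rw [div_le_iff₀ (by linarith)]
        simpa using key d h0
      have h3 := h1.trans h2
      rwa [div_le_iff₀ (by linarith)] at h3

lemma aux_taylor (b : ℝ → ℝ) (hb : ContDiff ℝ 2 b) (c₂ : ℝ)
    (hvar : ∀ θ : ℝ, c₂ ≤ deriv (deriv b) θ) (u v : ℝ) :
    deriv b v * (u - v) + c₂ / 2 * (u - v) ^ 2 ≤ b u - b v := by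
  have hd : Differentiable ℝ b := hb.differentiable (by norm_num)
  have hd2 : Differentiable ℝ (deriv b) := by
    have : ContDiff ℝ 1 (deriv b) := by
      have h2 : ContDiff ℝ (1 + 1) b := by simpa [one_add_one_eq_two] using hb
      exact (contDiff_succ_iff_deriv.1 h2).2.2
    exact this.differentiable (by norm_num)
  have hg : ∀ x, HasDerivAt (fun x => b x - c₂ / 2 * x ^ 2) (deriv b x - c₂ * x) x := by
    intro x
    have h := (hd x).hasDerivAt.sub ((hasDerivAt_pow 2 x).const_mul (c₂ / 2))
    refine HasDerivAt.congr_deriv h ?_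
    norm_num
    ring
  have hg' : deriv (fun x => b x - c₂ / 2 * x ^ 2) = fun x => deriv b x - c₂ * x :=
    funext fun x => (hg x).deriv
  have hm : Monotone (fun x => deriv b x - c₂ * x) := by
    have h2 : ∀ x, HasDerivAt (fun x => deriv b x - c₂ * x) (deriv (deriv b) x - c₂ * 1) x :=
      fun x => (hd2 x).hasDerivAt.sub ((hasDerivAt_id' x).const_mul c₂)
    refine monotone_of_deriv_nonneg (fun x => (h2 x).differentiableAt) fun x => ?_
    rw [(h2 x).deriv]
    linarith [hvar x]
  have hconv : ConvexOn ℝ Set.univ (fun x => b x - c₂ / 2 * x ^ 2) :=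
    Monotone.convexOn_univ_of_deriv (fun x => (hg x).differentiableAt) (hg' ▸ hm)
  rcases lt_trichotomy u v with h | h | h
  · have := hconv.slope_le_of_hasDerivAt (Set.mem_univ u) (Set.mem_univ v) h (hg v)
    rw [slope_def_field, div_le_iff₀ (by linarith)] at this
    nlinarith
  · subst h; simp
  · have := hconv.le_slope_of_hasDerivAt (Set.mem_univ v) (Set.mem_univ u) h (hg v)
    rw [slope_def_field, le_div_iff₀ (by linarith)] at this
    nlinarith

lemma aux_l1 {p : ℕ} (δ : Fin p → ℝ) :
    (∑ j, |δ j|) ^ 2 ≤ (l0 δ : ℝ) * ∑ j, δ j ^ 2 := by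
  have e1 : ∑ j, |δ j| = ∑ j ∈ Finset.univ.filter (fun j => δ j ≠ 0), |δ j| := by
    rw [Finset.sum_filter_of_ne]
    intro x _ h h'
    simp [h'] at h
  have e2 : ∑ j ∈ Finset.univ.filter (fun j => δ j ≠ 0), |δ j| ^ 2 ≤ ∑ j, δ j ^ 2 := by
    simp only [sq_abs]
    exact Finset.sum_le_sum_of_subset_of_nonneg (Finset.filter_subset _ _)
      (fun _ _ _ => sq_nonneg _)
  rw [e1]
  refine (sq_sum_le_card_mul_sum_sq).trans ?_
  exact mul_le_mul_of_nonneg_left e2 (by positivity)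

lemma aux_lq {p : ℕ} (δ : Fin p → ℝ) (A : ℝ) (hA : 0 ≤ A)
    (h : ∑ j, δ j ^ 2 ≤ A ^ 2 * l0 δ) (q : ℝ) (h1 : 1 ≤ q) (h2 : q ≤ 2) :
    (∑ j, |δ j| ^ q) ^ (1 / q) ≤ A * (l0 δ : ℝ) ^ (1 / q) := by
  have hq : 0 < q := by linarith
  set S := Finset.univ.filter (fun j => δ j ≠ 0) with hS
  have hcard : (l0 δ : ℝ) = S.card := rfl
  have e1 : ∑ j, |δ j| ^ q = ∑ j ∈ S, |δ j| ^ q := by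
    rw [hS, Finset.sum_filter_of_ne]
    intro x _ h h'
    simp [h', hq.ne'] at h
  have e2 : ∑ j ∈ S, δ j ^ 2 ≤ ∑ j, δ j ^ 2 :=
    Finset.sum_le_sum_of_subset_of_nonneg (Finset.filter_subset _ _)
      (fun _ _ _ => sq_nonneg _)
  rw [e1, hcard]
  rw [hcard] at h
  have hp : 1 ≤ 2 / q := by rw [le_div_iff₀ hq]; linarith
  have hh := Real.rpow_sum_le_const_mul_sum_rpow S (fun j => |δ j| ^ q) hp
  have e3 : ∑ j ∈ S, |(|δ j| ^ q)| ^ (2 / q) = ∑ j ∈ S, δ j ^ 2 := by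
    refine Finset.sum_congr rfl fun j _ => ?_
    rw [abs_of_nonneg (by positivity), ← Real.rpow_mul (abs_nonneg _), mul_div_cancel₀ _ hq.ne']
    norm_num
  have e4 : ∑ j ∈ S, |(|δ j| ^ q)| = ∑ j ∈ S, |δ j| ^ q := by
    refine Finset.sum_congr rfl fun j _ => abs_of_nonneg (by positivity)
  rw [e3, e4] at hh
  have hT : 0 ≤ ∑ j ∈ S, |δ j| ^ q := Finset.sum_nonneg fun _ _ => by positivity
  generalize (∑ j ∈ S, |δ j| ^ q) = T at *
  have sq' : ∀ x : ℝ, 0 ≤ x → (x ^ (1 / q)) ^ 2 = x ^ (2 / q) := by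
    intro x hx
    rw [← Real.rpow_natCast, ← Real.rpow_mul hx]
    congr 1
    push_cast
    ring
  refine le_of_sq_le_sq ?_ (by positivity)
  rw [mul_pow, sq' _ hT, sq' _ (by positivity)]
  refine hh.trans ?_
  rcases Nat.eq_zero_or_pos S.card with h0 | h0
  · have : ∑ j ∈ S, δ j ^ 2 = 0 := by rw [Finset.card_eq_zero.1 h0]; simp
    rw [this, mul_zero]; positivity
  · have hk : (0:ℝ) < S.card := by exact_mod_cast h0
    calc (S.card : ℝ) ^ (2 / q - 1) * ∑ j ∈ S, δ j ^ 2 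
        ≤ (S.card : ℝ) ^ (2 / q - 1) * (A ^ 2 * S.card) :=
          mul_le_mul_of_nonneg_left (e2.trans h) (by positivity)
      _ = A ^ 2 * (S.card : ℝ) ^ (2 / q) := by
          rw [Real.rpow_sub_one hk.ne']; field_simp

lemma aux_card {p : ℕ} (β₀ βh : Fin p → ℝ) (τ : ℝ) (hτ : 0 < τ)
    (h : ∀ j, βh j = 0 ∨ τ ≤ |βh j|) :
    τ ^ 2 * (l0 (fun j => βh j - β₀ j) : ℝ) ≤ τ ^ 2 * (l0 β₀ : ℝ) + ∑ j, (βh j - β₀ j) ^ 2 := by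
  have e : ∀ v : Fin p → ℝ, (l0 v : ℝ) = ∑ j, if v j ≠ 0 then (1:ℝ) else 0 := by
    intro v; rw [l0, Finset.card_filter]; push_cast; rfl
  rw [e, e, Finset.mul_sum, Finset.mul_sum, ← Finset.sum_add_distrib]
  refine Finset.sum_le_sum fun j _ => ?_
  by_cases h0 : β₀ j = 0
  · rcases h j with h1 | h1
    · simp [h0, h1]
    · have : βh j ≠ 0 := by
        intro h2; simp [h2] at h1; linarith
      simp only [h0, sub_zero, ne_eq, this, not_false_eq_true, not_true_eq_false, if_true, if_false]
      nlinarith [sq_abs (βh j)]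
  · have := sq_nonneg (βh j - β₀ j)
    have := sq_nonneg τ
    simp only [ne_eq, h0, not_false_eq_true, if_true]
    split_ifs <;> nlinarith

lemma aux_l0_sub {p : ℕ} (a d : Fin p → ℝ) : l0 (fun j => a j - d j) ≤ l0 a + l0 d := by
  unfold l0
  refine le_trans (Finset.card_le_card ?_) (Finset.card_union_le _ _)
  intro j
  simp only [Finset.mem_filter, Finset.mem_union, Finset.mem_univ, true_and]
  intro h
  by_contra hc
  push Not at hc
  simp [hc.1, hc.2] at h

/-- Deterministic form of Theorem 1(b): with `C₀ = (1 + 2c₃)/(c·c₂)` and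
`ρ = C₀²λ²/τ² < 1`, on the event `‖n⁻¹Xᵀε‖_∞ ≤ λ/2` the global minimizer satisfies
`‖β̂ − β₀‖_q ≤ C₀ λ s^{1/q} (1−ρ)^{−1/q}` for every `q ∈ [1,2]` and
`‖β̂ − β₀‖_∞ ≤ C₀ λ s^{1/2} (1−ρ)^{−1/2}`. -/
theorem estimation_losses_bound {n p : ℕ} (hn : 0 < n) (hp : 0 < p)
    (X : Matrix (Fin n) (Fin p) ℝ) (b : ℝ → ℝ) (hb : ContDiff ℝ 2 b)
    (β₀ : Fin p → ℝ) (ε : Fin n → ℝ) (y : Fin n → ℝ)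
    (hy : ∀ i, y i = deriv b (X.mulVec β₀ i) + ε i)
    -- bounded-variance condition
    (c₂ : ℝ) (hc₂ : 0 < c₂) (hc₂1 : c₂ ≤ 1)
    (hvar : ∀ θ : ℝ, c₂ ≤ deriv (deriv b) θ ∧ deriv (deriv b) θ ≤ c₂⁻¹)
    -- concave-penalty condition
    (pen : ℝ → ℝ) (lam c₃ : ℝ) (hc₃ : 0 < c₃) (hlam : 0 ≤ lam)
    (hmono : MonotoneOn pen (Set.Ici 0))
    (hconc : ConcaveOn ℝ (Set.Ici 0) pen)
    (hpen0 : pen 0 = 0)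
    (hpendiff : DifferentiableOn ℝ pen (Set.Ioi 0))
    (hpend0 : HasDerivWithinAt pen (c₃ * lam) (Set.Ici 0) 0)
    -- sparse-eigenvalue (robust spark) condition
    (c : ℝ) (hc : 0 < c) (κ : ℕ)
    (hse : ∀ v : Fin p → ℝ, l0 v < κ →
      c * ∑ j, (v j) ^ 2 ≤ (1 / (n : ℝ)) * ∑ i, (X.mulVec v i) ^ 2)
    -- thresholded parameter space and global minimizer
    (τ : ℝ) (hτ : 0 < τ) (hβ₀ : β₀ ∈ Bset τ κ)
    (βh : Fin p → ℝ) (hβh : βh ∈ Bset τ κ)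
    (hmin : ∀ β ∈ Bset τ κ, Qn X y b pen βh ≤ Qn X y b pen β)
    -- the event `‖n⁻¹Xᵀε‖_∞ ≤ λ/2`
    (hE : ∀ j, |(1 / (n : ℝ)) * ∑ i, X i j * ε i| ≤ lam / 2)
    -- the explicit constants
    (C₀ ρ : ℝ) (hC₀ : C₀ = (1 + 2 * c₃) / (c * c₂))
    (hρ : ρ = C₀ ^ 2 * lam ^ 2 / τ ^ 2) (hρ1 : ρ < 1) :
    (∀ q ∈ Set.Icc (1 : ℝ) 2,
      (∑ j, |βh j - β₀ j| ^ q) ^ (1 / q) ≤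
        C₀ * lam * ((l0 β₀ : ℝ)) ^ (1 / q) * (1 - ρ) ^ (-(1 / q))) ∧
    (∀ j, |βh j - β₀ j| ≤
        C₀ * lam * ((l0 β₀ : ℝ)) ^ ((1 : ℝ) / 2) * (1 - ρ) ^ (-(1 : ℝ) / 2)) := by
  have hn' : (0:ℝ) < n := by exact_mod_cast hn
  set δ : Fin p → ℝ := fun j => βh j - β₀ j with hδ
  have hXδ : ∀ i, X.mulVec δ i = X.mulVec βh i - X.mulVec β₀ i := by
    intro i
    have : δ = βh - β₀ := rfl
    rw [this, Matrix.mulVec_sub]; rfl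
  have hsp : l0 δ < κ := by
    have := aux_l0_sub βh β₀
    have h1 := hβ₀.1
    have h2 := hβh.1
    simp only [← hδ] at this
    omega
  have hse' := hse δ hsp
  have hm := hmin β₀ hβ₀
  -- curvature
  have hcurv : ∑ i, (deriv b (X.mulVec β₀ i) * X.mulVec δ i + c₂ / 2 * (X.mulVec δ i) ^ 2)
      ≤ ∑ i, (b (X.mulVec βh i) - b (X.mulVec β₀ i)) := by
    refine Finset.sum_le_sum fun i _ => ?_
    rw [hXδ]
    exact aux_taylor b hb c₂ (fun θ => (hvar θ).1) _ _
  have hpenb : ∑ j, (pen |β₀ j| - pen |βh j|) ≤ c₃ * lam * ∑ j, |δ j| := by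
    rw [Finset.mul_sum]
    refine Finset.sum_le_sum fun j _ => ?_
    have h1 := aux_pen pen (c₃ * lam) (by positivity) hmono hconc hpend0 |β₀ j| |βh j|
      (abs_nonneg _) (abs_nonneg _)
    refine h1.trans (mul_le_mul_of_nonneg_left ?_ (by positivity))
    rw [abs_sub_comm]
    exact abs_abs_sub_abs_le _ _
  have hnoise : (1 / (n:ℝ)) * ∑ i, ε i * X.mulVec δ i ≤ lam / 2 * ∑ j, |δ j| := by
    have e : (1 / (n:ℝ)) * ∑ i, ε i * X.mulVec δ i
        = ∑ j, ((1 / (n:ℝ)) * ∑ i, X i j * ε i) * δ j := by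
      simp only [Matrix.mulVec, dotProduct, Finset.mul_sum, Finset.sum_mul]
      rw [Finset.sum_comm]
      refine Finset.sum_congr rfl fun j _ => Finset.sum_congr rfl fun i _ => by ring
    rw [e, Finset.mul_sum]
    refine Finset.sum_le_sum fun j _ => ?_
    refine (le_abs_self _).trans ?_
    rw [abs_mul]
    exact mul_le_mul_of_nonneg_right (hE j) (abs_nonneg _)
  have hbasic : c * c₂ * ∑ j, δ j ^ 2 ≤ (1 + 2 * c₃) * lam * ∑ j, |δ j| := by
    have ey : ∑ i, y i * X.mulVec βh i - ∑ i, y i * X.mulVec β₀ i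
        = ∑ i, deriv b (X.mulVec β₀ i) * X.mulVec δ i + ∑ i, ε i * X.mulVec δ i := by
      rw [← Finset.sum_sub_distrib, ← Finset.sum_add_distrib]
      refine Finset.sum_congr rfl fun i _ => ?_
      rw [hXδ, hy]; ring
    unfold Qn at hm
    rw [Finset.sum_add_distrib, ← Finset.mul_sum, Finset.sum_sub_distrib] at hcurv
    rw [Finset.sum_sub_distrib] at hpenb
    have hcurv' := mul_le_mul_of_nonneg_left hcurv (by positivity : 0 ≤ 1 / (n:ℝ))
    have hse2 := mul_le_mul_of_nonneg_left hse' hc₂.le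
    have ey' := congrArg (fun t => 1 / (n:ℝ) * t) ey
    simp only [mul_sub, mul_add] at ey' hcurv' hm
    linarith
  have hC0 : 0 ≤ C₀ := by rw [hC₀]; positivity
  set A := C₀ * lam with hA
  have hA0 : 0 ≤ A := by positivity
  have hb2 : ∑ j, δ j ^ 2 ≤ A * ∑ j, |δ j| := by
    have : A * ∑ j, |δ j| = ((1 + 2 * c₃) * lam * ∑ j, |δ j|) / (c * c₂) := by
      rw [hA, hC₀]; ring
    rw [this, le_div_iff₀ (by positivity)]
    linarith
  have hl2 : ∑ j, δ j ^ 2 ≤ A ^ 2 * l0 δ := by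
    have h1 := aux_l1 δ
    have hN : 0 ≤ ∑ j, δ j ^ 2 := Finset.sum_nonneg fun _ _ => sq_nonneg _
    rcases hN.eq_or_lt with h0 | h0
    · rw [← h0]; positivity
    · have h3 : (∑ j, δ j ^ 2) ^ 2 ≤ (A * ∑ j, |δ j|) ^ 2 := pow_le_pow_left₀ hN hb2 2
      have h4 : (∑ j, δ j ^ 2) * (∑ j, δ j ^ 2) ≤ (A ^ 2 * l0 δ) * (∑ j, δ j ^ 2) := by
        have := mul_le_mul_of_nonneg_left h1 (sq_nonneg A)
        nlinarith
      exact le_of_mul_le_mul_right h4 h0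
  have hρ' : 0 < 1 - ρ := by linarith
  have hk : (l0 δ : ℝ) ≤ l0 β₀ * (1 - ρ)⁻¹ := by
    rw [← div_eq_mul_inv, le_div_iff₀ hρ']
    have h1 := aux_card β₀ βh τ hτ hβh.2
    simp only [← hδ] at h1
    have h2 : A ^ 2 = ρ * τ ^ 2 := by rw [hρ, hA]; field_simp
    have h3 : τ ^ 2 * (l0 δ * (1 - ρ)) ≤ τ ^ 2 * l0 β₀ := by
      change τ ^ 2 * (l0 δ : ℝ) ≤ τ ^ 2 * (l0 β₀ : ℝ) + ∑ j, δ j ^ 2 at h1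
      rw [h2] at hl2
      linarith
    exact le_of_mul_le_mul_left h3 (by positivity)
  have main : ∀ q ∈ Set.Icc (1 : ℝ) 2,
      (∑ j, |δ j| ^ q) ^ (1 / q) ≤
        A * ((l0 β₀ : ℝ)) ^ (1 / q) * (1 - ρ) ^ (-(1 / q)) := by
    intro q hq
    have hq0 : 0 < q := by linarith [hq.1]
    refine (aux_lq δ A hA0 hl2 q hq.1 hq.2).trans ?_
    rw [mul_assoc A, Real.rpow_neg hρ'.le, ← Real.inv_rpow hρ'.le,
      ← Real.mul_rpow (by positivity) (by positivity)]
    exact mul_le_mul_of_nonneg_left (Real.rpow_le_rpow (by positivity) hk (by positivity)) hA0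
  refine ⟨main, fun j => ?_⟩
  have h2 := main 2 (by norm_num)
  rw [neg_div]
  refine le_trans ?_ h2
  rw [← Real.sqrt_eq_rpow]
  refine Real.le_sqrt_of_sq_le ?_
  have := Finset.single_le_sum (f := fun j => |δ j| ^ (2:ℝ)) (fun i _ => by positivity)
    (Finset.mem_univ j)
  simpa using this
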